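/- Let G be a finite 3-group which is semi-3-abelian, let x ∈ Ω₁(G), let k ≥ 1, let g₁, …, g_k ∈ G, and let σ be a permutation of {1, …, k}. Then the left-normed iterated commutator satisfies [x, g_{σ(1)}, g_{σ(2)}, …, g_{σ(k)}] = [x, g₁, g₂, …, g_k]^(2^δ(σ)), where δ(σ) = 0 if σ is an even permutation and δ(σ) = 1 if σ is odd. -/

import Mathlib

/-- The left-normed iterated commutator `[x, g₁, …, g_k]` with
`[x,y] = x⁻¹ * y⁻¹ * x * y`. -/
def commChain {G : Type*} [Group G] (x : G) (l : List G) : G :=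
  l.foldl (fun y g => y⁻¹ * g⁻¹ * y * g) x

/-! Let `x ^ 3 = 1`. Semi-3-abelianness, applied to a conjugate of `x` as `(g * x) * g⁻¹`, gives
`(g * x) ^ 3 = g ^ 3`. Expanding this for `x` and for `x⁻¹` shows that `x` commutes with its
conjugates and that `[x, g, g] = 1` for every `g`. So the normal closure `N` of `x` is abelian of
exponent dividing 3, and `[y, g, g] = 1` for all `y ∈ N`. Hence `[y, g⁻¹] = [y, g]⁻¹`, and expanding
`[y, (g * h)⁻¹] = [y, g * h]⁻¹` on both sides yields `[y, h, g] = [y, g, h]⁻¹`: exchanging two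
neighbouring entries inverts an iterated commutator. Such exchanges generate the symmetric group,
and inverting is squaring in exponent 3. -/

section CommChain

variable {G : Type*} [Group G]

theorem commChain_singleton (x g : G) : commChain x [g] = x⁻¹ * g⁻¹ * x * g := rfl

theorem commChain_cons (x g : G) (l : List G) :
    commChain x (g :: l) = commChain (commChain x [g]) l := rfl

theorem commChain_cons_cons (x g h : G) (l : List G) :
    commChain x (g :: h :: l) = commChain (commChain x [g, h]) l := rfl

theorem commChain_ofFn_succ (x : G) {n : ℕ} (g : Fin (n + 1) → G) :
    commChain x (List.ofFn g) = commChain (commChain x [g 0]) (List.ofFn (Fin.tail g)) := by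
  rw [List.ofFn_succ, commChain_cons]
  rfl

theorem commChain_singleton_mul (x g h : G) :
    commChain x [g * h] = commChain x [h] * commChain x [g] * commChain x [g, h] := by
  simp only [commChain_cons x g [h], commChain_singleton]
  group

theorem commChain_singleton_inv_of_pair_self {x g : G} (hx : commChain x [g, g] = 1) :
    commChain x [g⁻¹] = (commChain x [g])⁻¹ := by
  have hcomm : Commute (commChain x [g])⁻¹ g := by
    rw [commChain_cons, commChain_singleton, mul_assoc, ← mul_inv_rev, inv_mul_eq_one] at hx
    exact (Commute.symm hx).inv_left
  calc commChain x [g⁻¹] = g * (commChain x [g])⁻¹ * g⁻¹ := by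
        simp only [commChain_singleton]; group
    _ = (commChain x [g])⁻¹ := by rw [← hcomm.eq, mul_inv_cancel_right]

section AbelianNormal

variable {N : Subgroup G} [N.Normal] {x : G}

theorem commChain_mem (hx : x ∈ N) (l : List G) : commChain x l ∈ N := by
  induction l generalizing x with
  | nil => exact hx
  | cons g _ ih =>
    have hsingle : commChain x [g] ∈ N := by
      rw [commChain_singleton, mul_assoc, mul_assoc, ← mul_assoc g⁻¹]
      exact mul_mem (inv_mem hx) (Subgroup.Normal.conj_mem' ‹_› x hx g)
    exact ih hsingle

variable [IsMulCommutative N]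

theorem commChain_inv (hx : x ∈ N) (l : List G) : commChain x⁻¹ l = (commChain x l)⁻¹ := by
  induction l generalizing x with
  | nil => rfl
  | cons g l ih =>
    have hconj : g⁻¹ * x⁻¹ * g ∈ N := Subgroup.Normal.conj_mem' ‹_› _ (inv_mem hx) g
    have hsingle : commChain x⁻¹ [g] = (commChain x [g])⁻¹ := by
      calc commChain x⁻¹ [g] = x * (g⁻¹ * x⁻¹ * g) := by rw [commChain_singleton]; group
        _ = (g⁻¹ * x⁻¹ * g) * x := setLike_mul_comm hx hconj
        _ = (commChain x [g])⁻¹ := by rw [commChain_singleton]; group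
    rw [commChain_cons, hsingle, ih (commChain_mem hx [g]), ← commChain_cons]

variable (hN : ∀ y ∈ N, ∀ g : G, commChain y [g, g] = 1)
include hN

theorem commChain_pair_swap (hx : x ∈ N) (g h : G) :
    commChain x [h, g] = (commChain x [g, h])⁻¹ := by
  have hinv {y : G} (hy : y ∈ N) (a : G) : commChain y [a⁻¹] = (commChain y [a])⁻¹ :=
    commChain_singleton_inv_of_pair_self (hN y hy a)
  have hpair : commChain x [h⁻¹, g⁻¹] = commChain x [h, g] := by
    have hh := commChain_mem hx [h]
    rw [commChain_cons, hinv hx, hinv (inv_mem hh), commChain_inv hh, inv_inv, ← commChain_cons]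
  set u := (commChain x [g])⁻¹ * (commChain x [h])⁻¹
  have huN : u ∈ N := mul_mem (inv_mem (commChain_mem hx [g])) (inv_mem (commChain_mem hx [h]))
  refine mul_left_cancel (a := u) ?_
  calc u * commChain x [h, g] = commChain x [(g * h)⁻¹] := by
        rw [mul_inv_rev, commChain_singleton_mul, hinv hx, hinv hx, hpair]
    _ = (commChain x [g, h])⁻¹ * u := by
        rw [hinv hx, commChain_singleton_mul, mul_inv_rev, mul_inv_rev]
    _ = u * (commChain x [g, h])⁻¹ := setLike_mul_comm (inv_mem (commChain_mem hx [g, h])) huN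

theorem commChain_ofFn_comp_swap_castSucc_succ (hx : x ∈ N) {n : ℕ} (g : Fin (n + 1) → G)
    (i : Fin n) :
    commChain x (List.ofFn (g ∘ Equiv.swap i.castSucc i.succ)) =
      (commChain x (List.ofFn g))⁻¹ := by
  induction n generalizing x with
  | zero => exact i.elim0
  | succ n ih =>
    cases i using Fin.cases with
    | zero =>
      have htail (j : Fin n) : Equiv.swap (0 : Fin (n + 2)) 1 j.succ.succ = j.succ.succ :=
        Equiv.swap_apply_of_ne_of_ne (Fin.succ_ne_zero _) (by simp [Fin.ext_iff])
      simp only [List.ofFn_succ, Function.comp_apply, Fin.castSucc_zero, Fin.succ_zero_eq_one,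
        Equiv.swap_apply_left, Equiv.swap_apply_right, htail]
      rw [commChain_cons_cons, commChain_pair_swap hN hx, commChain_inv (commChain_mem hx _),
        ← commChain_cons_cons]
    | succ i =>
      have hzero : Equiv.swap i.succ.castSucc i.succ.succ 0 = 0 :=
        Equiv.swap_apply_of_ne_of_ne (by simp [Fin.ext_iff]) (Fin.succ_ne_zero _).symm
      have htail : Fin.tail (g ∘ Equiv.swap i.succ.castSucc i.succ.succ) =
          Fin.tail g ∘ Equiv.swap i.castSucc i.succ :=
        funext fun j ↦ congrArg g ((Fin.succ_injective _).swap_apply i.castSucc i.succ j)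
      rw [commChain_ofFn_succ, htail, Function.comp_apply, hzero, commChain_ofFn_succ x g]
      exact ih (commChain_mem hx [g 0]) (Fin.tail g) i

theorem commChain_ofFn_comp_perm (hx : x ∈ N) {k : ℕ} (g : Fin k → G) (σ : Equiv.Perm (Fin k)) :
    commChain x (List.ofFn (g ∘ σ)) = commChain x (List.ofFn g) ^ (Equiv.Perm.sign σ : ℤ) := by
  obtain _ | n := k
  · simp [Subsingleton.elim σ 1]
  · have hσ : σ ∈ Submonoid.closure (Set.range fun i : Fin n ↦ Equiv.swap i.castSucc i.succ) := by
      rw [Equiv.Perm.mclosure_swap_castSucc_succ]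
      trivial
    induction hσ using Submonoid.closure_induction generalizing g with
    | mem _ hτ =>
      obtain ⟨i, rfl⟩ := hτ
      rw [commChain_ofFn_comp_swap_castSucc_succ hN hx, Equiv.Perm.sign_swap i.castSucc_lt_succ.ne]
      simp
    | one => simp
    | mul σ τ _ _ ihσ ihτ =>
      rw [Equiv.Perm.coe_mul, ← Function.comp_assoc, ihτ, ihσ, ← zpow_mul, map_mul, Units.val_mul]

end AbelianNormal

end CommChain

theorem isMulCommutative_normalClosure_singleton_of_commute_conj {G : Type*} [Group G] {x : G}
    (hx : ∀ g : G, Commute (g * x * g⁻¹) x) :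
    IsMulCommutative (Subgroup.normalClosure {x}) := by
  refine Subgroup.isMulCommutative_closure fun y hy z hz ↦ ?_
  simp only [Group.mem_conjugatesOfSet_iff, Set.mem_singleton_iff, exists_eq_left,
    isConj_iff] at hy hz
  obtain ⟨a, rfl⟩ := hy
  obtain ⟨b, rfl⟩ := hz
  have h := (hx (b⁻¹ * a)).conj b
  rw [show b * (b⁻¹ * a * x * (b⁻¹ * a)⁻¹) * b⁻¹ = a * x * a⁻¹ by group] at h
  exact h.eq

/-- A group is semi-`n`-abelian if a product of two elements has trivial `n`-th power exactly when
the product of their `n`-th powers is trivial. -/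
def IsSemiAbelian (n : ℕ) (G : Type*) [Group G] : Prop :=
  ∀ a b : G, (a * b) ^ n = 1 ↔ a ^ n * b ^ n = 1

namespace IsSemiAbelian

variable {G : Type*} [Group G] {n : ℕ}

/-- The subgroup `{x | x ^ n = 1}` of a semi-`n`-abelian group. For a prime `p` and a
semi-`p`-abelian `p`-group it is `Ω₁(G)`. -/
def powKer (hG : IsSemiAbelian n G) : Subgroup G where
  carrier := {x | x ^ n = 1}
  one_mem' := one_pow n
  mul_mem' {a b} ha hb := (hG a b).2 (by rw [ha, hb, one_mul])
  inv_mem' {a} ha := show a⁻¹ ^ n = 1 by rw [inv_pow, ha, inv_one]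

theorem mem_powKer (hG : IsSemiAbelian n G) {x : G} : x ∈ hG.powKer ↔ x ^ n = 1 := Iff.rfl

theorem powKer_normal (hG : IsSemiAbelian n G) : hG.powKer.Normal where
  conj_mem x hx g := hG.mem_powKer.2 <| by rw [conj_pow, hx, mul_one, mul_inv_cancel]

theorem mul_pow_of_pow_eq_one (hG : IsSemiAbelian n G) {x : G} (hx : x ^ n = 1) (g : G) :
    (g * x) ^ n = g ^ n := by
  have h := (hG (g * x) g⁻¹).1 (hG.powKer_normal.conj_mem x hx g)
  rwa [inv_pow, mul_inv_eq_one] at h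

variable (hG : IsSemiAbelian 3 G) {x : G} (hx : x ^ 3 = 1)
include hG hx

theorem conj_sq_mul_conj_mul_self (g : G) :
    ((g ^ 2)⁻¹ * x * g ^ 2) * (g⁻¹ * x * g) * x = 1 := by
  calc _ = (g ^ 3)⁻¹ * (g * x) ^ 3 := by simp only [pow_succ, pow_zero]; group
    _ = 1 := by rw [hG.mul_pow_of_pow_eq_one hx, inv_mul_cancel]

theorem self_mul_conj_mul_conj_sq (g : G) :
    x * (g⁻¹ * x * g) * ((g ^ 2)⁻¹ * x * g ^ 2) = 1 := by
  have h := hG.conj_sq_mul_conj_mul_self (x := x⁻¹) (by rw [inv_pow, hx, inv_one]) g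
  rw [← inv_inj, inv_one, ← h]
  group

theorem commute_conj_self (g : G) : Commute (g⁻¹ * x * g) x := by
  have hleft := hG.conj_sq_mul_conj_mul_self hx g
  rw [mul_assoc] at hleft
  exact (eq_inv_of_mul_eq_one_right hleft).trans
    (eq_inv_of_mul_eq_one_left (hG.self_mul_conj_mul_conj_sq hx g)).symm

theorem commChain_pair_self (g : G) : commChain x [g, g] = 1 := by
  set y := g⁻¹ * x * g with hy
  set z := (g ^ 2)⁻¹ * x * g ^ 2 with hz
  have hxyz : x * y * z = 1 := hG.self_mul_conj_mul_conj_sq hx g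
  have hcomm : Commute y x := hG.commute_conj_self hx g
  have hinv : y⁻¹ * y⁻¹ = y := by
    have hy3 : y ^ 3 = 1 := hG.powKer_normal.conj_mem' x hx g
    rw [← mul_inv_rev, inv_eq_iff_mul_eq_one, ← hy3, pow_succ, sq]
  calc commChain x [g, g] = y⁻¹ * x * y⁻¹ * z := by
        rw [commChain_cons, commChain_singleton, commChain_singleton, hy, hz, sq]; group
    _ = x * (y⁻¹ * y⁻¹) * z := by rw [hcomm.inv_left.eq, mul_assoc x]
    _ = 1 := by rw [hinv, hxyz]

theorem isMulCommutative_normalClosure : IsMulCommutative (Subgroup.normalClosure {x}) :=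
  isMulCommutative_normalClosure_singleton_of_commute_conj fun g ↦ by
    simpa using hG.commute_conj_self hx g⁻¹

end IsSemiAbelian

theorem semi3abelian_commChain_perm_general {G : Type*} [Group G] (hG : IsSemiAbelian 3 G)
    {x : G} (hx : x ∈ Subgroup.closure {g : G | g ^ 3 = 1}) {k : ℕ} (g : Fin k → G)
    (σ : Equiv.Perm (Fin k)) :
    commChain x (List.ofFn (g ∘ σ)) =
      commChain x (List.ofFn g) ^ (2 ^ (if Equiv.Perm.sign σ = 1 then 0 else 1)) := by
  have hx3 : x ∈ hG.powKer := (Subgroup.closure_le hG.powKer).2 subset_rfl hx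
  have := hG.powKer_normal
  have := hG.isMulCommutative_normalClosure hx3
  have hN : Subgroup.normalClosure {x} ≤ hG.powKer :=
    Subgroup.normalClosure_le_normal (Set.singleton_subset_iff.2 hx3)
  have hcube : commChain x (List.ofFn g) ^ 3 = 1 := commChain_mem hx3 _
  rw [commChain_ofFn_comp_perm (fun y hy ↦ hG.commChain_pair_self (hN hy))
    (Subgroup.subset_normalClosure rfl)]
  obtain hσ | hσ := Int.units_eq_one_or (Equiv.Perm.sign σ)
  · simp [hσ]
  · have hsq : (commChain x (List.ofFn g))⁻¹ = commChain x (List.ofFn g) ^ 2 :=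
      inv_eq_of_mul_eq_one_left (by rw [← pow_succ, hcube])
    simp [hσ, hsq]

/-- In a finite semi-3-abelian 3-group, for `x ∈ Ω₁(G)` and `g₁, …, g_k ∈ G`, permuting
the entries of the left-normed commutator `[x, g₁, …, g_k]` by `σ` yields
`[x, g₁, …, g_k] ^ (2 ^ δ(σ))`, where `δ(σ) = 0` for even `σ` and `δ(σ) = 1` for odd `σ`. -/
theorem semi3abelian_commChain_perm (G : Type*) [Group G] [Finite G]
    (hG : IsPGroup 3 G)
    (hsemi : ∀ a b : G, (a * b) ^ 3 = 1 ↔ a ^ 3 * b ^ 3 = 1)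
    (x : G) (hx : x ∈ Subgroup.closure {g : G | g ^ 3 = 1})
    (k : ℕ) (hk : 1 ≤ k) (g : Fin k → G) (σ : Equiv.Perm (Fin k)) :
    commChain x (List.ofFn (g ∘ σ)) =
      (commChain x (List.ofFn g)) ^ (2 ^ (if Equiv.Perm.sign σ = 1 then 0 else 1)) :=
  semi3abelian_commChain_perm_general hsemi hx g σ
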